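/- (Theorem 5.1, auxiliary kernel K̄₁.) With the matrix triplet data as in the context, fix x ∈ ℝ, assume Γ̄(x) is invertible, and let K₁(x, z) := −C̄·e^{−iĀx}·Γ̄(x)^{−1}·e^{−iĀz}·B̄. Then for every y > x the auxiliary Marchenko relation K̄₁(x, y) = i·∫_x^∞ K₁(x, z)·Ω'(z + y) dz holds with the explicit value K̄₁(x, y) = C̄·e^{−iĀx}·Γ̄(x)^{−1}·e^{−iĀx}·M̄·A·e^{iA(x+y)}·B; that is, i·∫_x^∞ K₁(x, z)·Ω'(z + y) dz = C̄·e^{−iĀx}·Γ̄(x)^{−1}·e^{−iĀx}·M̄·A·e^{iA(x+y)}·B. -/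

import Mathlib

open MeasureTheory Matrix

/-- e^{iAt} for a complex square matrix A and real t. -/
noncomputable def eiA {n : ℕ} (A : Matrix (Fin n) (Fin n) ℂ) (t : ℝ) :
    Matrix (Fin n) (Fin n) ℂ :=
  NormedSpace.exp ((Complex.I * t) • A)

section ExpHelpers

attribute [local instance] Matrix.linftyOpNormedRing Matrix.linftyOpNormedAlgebra

theorem aux_exp_continuous {n : ℕ} : Continuous
    (NormedSpace.exp : Matrix (Fin n) (Fin n) ℂ → Matrix (Fin n) (Fin n) ℂ) := by
  let _ : NormedAlgebra ℚ (Matrix (Fin n) (Fin n) ℂ) := NormedAlgebra.restrictScalars ℚ ℂ _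
  exact NormedSpace.exp_continuous

theorem aux_exp_scalar {n : ℕ} (c : ℂ) :
    NormedSpace.exp (c • (1 : Matrix (Fin n) (Fin n) ℂ)) = Complex.exp c • 1 := by
  have h := NormedSpace.algebraMap_exp_comm (𝕂 := ℂ) (𝔸 := Matrix (Fin n) (Fin n) ℂ) c
  rw [Algebra.algebraMap_eq_smul_one, Algebra.algebraMap_eq_smul_one] at h
  rw [Complex.exp_eq_exp_ℂ]
  exact h.symm

theorem aux_exp_hasSum {n : ℕ} (X : Matrix (Fin n) (Fin n) ℂ) :
    HasSum (fun k : ℕ => ((k.factorial : ℂ)⁻¹) • X ^ k) (NormedSpace.exp X) :=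
  NormedSpace.exp_series_hasSum_exp' (𝕂 := ℂ) X

end ExpHelpers

theorem aux_exp_nil {n : ℕ} (N : Matrix (Fin n) (Fin n) ℂ) (v : Fin n → ℂ) (k : ℕ)
    (h : (N ^ k) *ᵥ v = 0) (z : ℂ) :
    NormedSpace.exp (z • N) *ᵥ v
      = ∑ j ∈ Finset.range k, ((j.factorial : ℂ)⁻¹ * z ^ j) • ((N ^ j) *ᵥ v) := by
  have h1 := aux_exp_hasSum (z • N)
  have h2 := h1.map (AddMonoidHom.mk' (fun X : Matrix (Fin n) (Fin n) ℂ => X *ᵥ v)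
    (fun X Y => Matrix.add_mulVec X Y v))
    (show Continuous (fun X : Matrix (Fin n) (Fin n) ℂ => X *ᵥ v) by fun_prop)
  have h3 : HasSum (fun j : ℕ => ((j.factorial : ℂ)⁻¹ * z ^ j) • ((N ^ j) *ᵥ v))
      (NormedSpace.exp (z • N) *ᵥ v) := by
    convert h2 using 1
    · funext j
      simp [smul_pow, Matrix.smul_mulVec, smul_smul]
    · rfl
  refine h3.unique (hasSum_sum_of_ne_finset_zero ?_)
  intro b hb
  have hb' : k ≤ b := by simpa using hb
  have : (N ^ b) *ᵥ v = 0 := by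
    rw [← Nat.sub_add_cancel hb', pow_add, ← Matrix.mulVec_mulVec, h, Matrix.mulVec_zero]
  rw [this, smul_zero]

/-- exponential decay of a function at infinity -/
def ExpDec (f : ℝ → ℂ) : Prop :=
  ∃ ε : ℝ, 0 < ε ∧ f =O[Filter.atTop] fun t => Real.exp (-ε * t)

theorem ExpDec.zero : ExpDec (fun _ => 0) := ⟨1, one_pos, Asymptotics.isBigO_zero _ _⟩

theorem aux_mono {a b : ℝ} (h : a ≤ b) :
    (fun t : ℝ => Real.exp (-b * t)) =O[Filter.atTop] fun t => Real.exp (-a * t) := by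
  refine Asymptotics.IsBigO.of_bound 1 ?_
  filter_upwards [Filter.eventually_ge_atTop 0] with t ht
  rw [Real.norm_eq_abs, Real.norm_eq_abs, abs_of_pos (Real.exp_pos _),
    abs_of_pos (Real.exp_pos _), one_mul]
  apply Real.exp_le_exp.2
  nlinarith

theorem ExpDec.add {f g : ℝ → ℂ} (hf : ExpDec f) (hg : ExpDec g) :
    ExpDec (fun t => f t + g t) := by
  obtain ⟨a, ha, hf⟩ := hf
  obtain ⟨b, hb, hg⟩ := hg
  exact ⟨min a b, lt_min ha hb, (hf.trans (aux_mono (min_le_left _ _))).add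
    (hg.trans (aux_mono (min_le_right _ _)))⟩

theorem ExpDec.mul {f g : ℝ → ℂ} (hf : ExpDec f) (hg : ExpDec g) :
    ExpDec (fun t => f t * g t) := by
  obtain ⟨a, ha, hf⟩ := hf
  obtain ⟨b, hb, hg⟩ := hg
  refine ⟨a + b, by positivity, (hf.mul hg).congr_right ?_⟩
  intro t
  rw [← Real.exp_add]
  congr 1
  ring

theorem ExpDec.const_mul {f : ℝ → ℂ} (hf : ExpDec f) (c : ℂ) :
    ExpDec (fun t => c * f t) := by
  obtain ⟨a, ha, hf⟩ := hf
  exact ⟨a, ha, hf.const_mul_left c⟩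

theorem ExpDec.sum {ι : Type*} (s : Finset ι) {f : ι → ℝ → ℂ} (hf : ∀ i ∈ s, ExpDec (f i)) :
    ExpDec (fun t => ∑ i ∈ s, f i t) := by
  classical
  induction s using Finset.induction_on with
  | empty => simpa using ExpDec.zero
  | insert a s ha ih =>
    simp only [Finset.sum_insert ha]
    exact (hf a (by simp)).add (ih fun i hi => hf i (by simp [hi]))

theorem ExpDec.integrableOn {f : ℝ → ℂ} (hf : ExpDec f) (hc : Continuous f) :
    IntegrableOn f (Set.Ioi 0) := by
  obtain ⟨a, ha, hf⟩ := hf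
  have h := integrable_of_isBigO_exp_neg (a := 0) ha hc.norm.continuousOn hf.norm_left
  exact (integrable_norm_iff hc.aestronglyMeasurable).1 h

theorem aux_pow_exp (μ : ℂ) (hμ : 0 < μ.im) (j : ℕ) :
    ExpDec (fun t : ℝ => Complex.exp (Complex.I * t * μ) * (Complex.I * t) ^ j) := by
  refine ⟨μ.im / 2, by positivity, ?_⟩
  have h1 : (fun t : ℝ => Complex.exp (Complex.I * t * μ)) =O[Filter.atTop]
      fun t : ℝ => Real.exp (-μ.im * t) := by
    refine Asymptotics.IsBigO.of_bound 1 (Filter.Eventually.of_forall fun t => ?_)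
    rw [Complex.norm_exp, Real.norm_eq_abs, abs_of_pos (Real.exp_pos _), one_mul]
    apply Real.exp_le_exp.2
    simp [mul_comm]
  have h2 : (fun t : ℝ => (Complex.I * t) ^ j) =O[Filter.atTop]
      fun t : ℝ => Real.exp (μ.im / 2 * t) := by
    have h := (isLittleO_pow_exp_pos_mul_atTop j (half_pos hμ)).isBigO
    refine Asymptotics.IsBigO.trans ?_ h
    refine Asymptotics.IsBigO.of_bound 1 (Filter.Eventually.of_forall fun t => ?_)
    simp
  refine (h1.mul h2).congr_right fun t => ?_
  rw [← Real.exp_add]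
  congr 1
  ring

theorem aux_dec_vec {n : ℕ} (A : Matrix (Fin n) (Fin n) ℂ)
    (hA : ∀ μ ∈ spectrum ℂ A, 0 < μ.im) (v : Fin n → ℂ) :
    ∀ i, ExpDec (fun t => (eiA A t *ᵥ v) i) := by
  have hv : v ∈ ⨆ μ, Module.End.maxGenEigenspace (Matrix.toLin' A) μ := by
    rw [Module.End.iSup_maxGenEigenspace_eq_top]; trivial
  refine Submodule.iSup_induction _ (motive := fun v => ∀ i, ExpDec (fun t => (eiA A t *ᵥ v) i))
    hv ?_ ?_ ?_
  · intro μ w hw i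
    rw [Module.End.mem_maxGenEigenspace] at hw
    obtain ⟨k, hk⟩ := hw
    have hk' : ((A - μ • 1) ^ k) *ᵥ w = 0 := by
      rw [← Matrix.toLin'_apply, Matrix.toLin'_pow, map_sub, map_smul, Matrix.toLin'_one]
      exact hk
    by_cases hμ : μ ∈ spectrum ℂ A
    · have h : ∀ t : ℝ, (eiA A t *ᵥ w) i = ∑ j ∈ Finset.range k,
          (((j.factorial : ℂ)⁻¹ * (((A - μ • 1) ^ j) *ᵥ w) i) *
            (Complex.exp (Complex.I * t * μ) * (Complex.I * t) ^ j)) := by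
        intro t
        have e : (Complex.I * (t : ℂ)) • A = (Complex.I * t * μ) • 1
            + (Complex.I * (t : ℂ)) • (A - μ • 1) := by
          rw [smul_sub, smul_smul]; abel
        rw [eiA, e, Matrix.exp_add_of_commute _ _ ((Commute.one_left _).smul_left _),
          aux_exp_scalar, ← Matrix.mulVec_mulVec, aux_exp_nil _ _ _ hk', Matrix.smul_mulVec,
          Matrix.one_mulVec]
        simp only [Pi.smul_apply, Finset.sum_apply, smul_eq_mul, Finset.mul_sum]
        refine Finset.sum_congr rfl fun j _ => ?_
        ring
      simp only [h]
      exact ExpDec.sum _ fun j _ => (aux_pow_exp μ (hA μ hμ) j).const_mul _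
    · have hu : IsUnit (A - μ • 1) := by
        rw [spectrum.notMem_iff, Algebra.algebraMap_eq_smul_one] at hμ
        simpa using hμ.neg
      have hw0 : w = 0 := by
        apply Matrix.mulVec_injective_iff_isUnit.2 (hu.pow k)
        rw [hk', Matrix.mulVec_zero]
      simpa [hw0] using ExpDec.zero
  · intro i
    simpa using ExpDec.zero
  · intro u w hu hw i
    simp only [Matrix.mulVec_add, Pi.add_apply]
    exact (hu i).add (hw i)

theorem aux_dec {n : ℕ} (A : Matrix (Fin n) (Fin n) ℂ)
    (hA : ∀ μ ∈ spectrum ℂ A, 0 < μ.im) (i j : Fin n) :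
    ExpDec (fun t => eiA A t i j) := by
  have := aux_dec_vec A hA (Pi.single j 1) i
  simpa using this

theorem eiA_neg {n : ℕ} (A : Matrix (Fin n) (Fin n) ℂ) (t : ℝ) : eiA A (-t) = eiA (-A) t := by
  simp [eiA]

theorem eiA_add {n : ℕ} (A : Matrix (Fin n) (Fin n) ℂ) (s t : ℝ) :
    eiA A (s + t) = eiA A s * eiA A t := by
  rw [eiA, eiA, eiA, ← Matrix.exp_add_of_commute _ _
    (((Commute.refl A).smul_left _).smul_right _), ← add_smul]
  congr 2
  push_cast
  ring

theorem eiA_comm {n : ℕ} (A : Matrix (Fin n) (Fin n) ℂ) (t : ℝ) :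
    A * eiA A t = eiA A t * A := by
  have h1 := (aux_exp_hasSum ((Complex.I * (t : ℂ)) • A))
  have h2 := h1.map (AddMonoidHom.mulLeft A) (show Continuous (fun X : Matrix (Fin n) (Fin n) ℂ => A * X) by fun_prop)
  have h3 := h1.map (AddMonoidHom.mulRight A) (show Continuous (fun X : Matrix (Fin n) (Fin n) ℂ => X * A) by fun_prop)
  refine h2.unique ?_
  convert h3 using 1
  · funext k
    simp only [Function.comp, AddMonoidHom.coe_mulLeft, AddMonoidHom.coe_mulRight,
      smul_pow, Matrix.mul_smul, Matrix.smul_mul, ← pow_succ, ← pow_succ']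
  · rfl

theorem eiA_continuous {n : ℕ} (A : Matrix (Fin n) (Fin n) ℂ) : Continuous (eiA A) := by
  unfold eiA
  exact aux_exp_continuous.comp (by fun_prop)

theorem aux_integrable {n m : ℕ} (A : Matrix (Fin n) (Fin n) ℂ)
    (hA : ∀ μ ∈ spectrum ℂ A, 0 < μ.im)
    (Ab : Matrix (Fin m) (Fin m) ℂ) (hAb : ∀ μ ∈ spectrum ℂ Ab, μ.im < 0)
    (D : Matrix (Fin m) (Fin n) ℂ) (i : Fin m) (j : Fin n) :
    IntegrableOn (fun z => (eiA Ab (-z) * D * eiA A z) i j) (Set.Ioi 0) := by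
  apply ExpDec.integrableOn
  · simp only [Matrix.mul_apply, Finset.sum_mul]
    refine ExpDec.sum _ fun k _ => ExpDec.sum _ fun l _ => ?_
    have h1 : ExpDec (fun t => eiA Ab (-t) i l) := by
      simp only [eiA_neg]
      apply aux_dec
      intro μ hμ
      rw [← spectrum.neg_eq] at hμ
      have := hAb (-μ) (by simpa using hμ)
      simpa using this
    have h2 := (h1.mul (aux_dec A hA k j)).const_mul (D l k)
    refine Eq.mp ?_ h2
    congr 1
    funext t
    ring
  · have h1 := eiA_continuous A
    have h2 := (eiA_continuous Ab).comp continuous_neg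
    have h3 : Continuous (fun z => eiA Ab (-z) * D * eiA A z) :=
      (h2.matrix_mul continuous_const).matrix_mul h1
    exact h3.matrix_elem i j

theorem aux_integral {n m : ℕ} (F : ℝ → Matrix (Fin m) (Fin n) ℂ) (Mb : Matrix (Fin m) (Fin n) ℂ)
    (hF : ∀ i j, IntegrableOn (fun z => F z i j) (Set.Ioi 0))
    (hMb : ∀ i j, Mb i j = ∫ z in Set.Ioi (0 : ℝ), F z i j)
    (P : Matrix (Fin 1) (Fin m) ℂ) (Q : Matrix (Fin n) (Fin 1) ℂ) :
    ∫ z in Set.Ioi (0 : ℝ), (P * F z * Q) 0 0 = (P * Mb * Q) 0 0 := by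
  simp only [Matrix.mul_apply, Finset.sum_mul]
  have hi : ∀ k l, IntegrableOn (fun z => P 0 l * F z l k * Q k 0) (Set.Ioi 0) :=
    fun k l => ((hF l k).const_mul _).mul_const _
  rw [integral_finsetSum _ fun k _ => integrable_finsetSum _ fun l _ => hi k l]
  refine Finset.sum_congr rfl fun k _ => ?_
  rw [integral_finsetSum _ fun l _ => hi k l]
  refine Finset.sum_congr rfl fun l _ => ?_
  rw [integral_mul_const, integral_const_mul, hMb]

theorem aux_shift (g : ℝ → ℂ) (x : ℝ) :
    ∫ z in Set.Ioi x, g z = ∫ s in Set.Ioi (0 : ℝ), g (s + x) := by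
  have h := (measurePreserving_add_right volume x).setIntegral_preimage_emb
    (measurableEmbedding_addRight x) g (Set.Ioi x)
  rw [← h]
  simp

/-- Theorem 5.1, auxiliary kernel K̄₁: the auxiliary Marchenko relation
K̄₁(x,y) = i ∫_x^∞ K₁(x,z) Ω'(z+y) dz holds with the explicit value
K̄₁(x,y) = C̄ e^{-iĀx} Γ̄(x)⁻¹ e^{-iĀx} M̄ A e^{iA(x+y)} B. -/
theorem marchenko_auxiliary_Kb1
    (𝒩 𝒩b : ℕ)
    (A : Matrix (Fin 𝒩) (Fin 𝒩) ℂ) (hA : ∀ μ ∈ spectrum ℂ A, 0 < μ.im)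
    (B : Matrix (Fin 𝒩) (Fin 1) ℂ) (C : Matrix (Fin 1) (Fin 𝒩) ℂ)
    (Ab : Matrix (Fin 𝒩b) (Fin 𝒩b) ℂ) (hAb : ∀ μ ∈ spectrum ℂ Ab, μ.im < 0)
    (Bb : Matrix (Fin 𝒩b) (Fin 1) ℂ) (Cb : Matrix (Fin 1) (Fin 𝒩b) ℂ)
    (M : Matrix (Fin 𝒩) (Fin 𝒩b) ℂ)
    (hM : ∀ i j, M i j = ∫ z in Set.Ioi (0 : ℝ), (eiA A z * B * Cb * eiA Ab (-z)) i j)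
    (Mb : Matrix (Fin 𝒩b) (Fin 𝒩) ℂ)
    (hMb : ∀ i j, Mb i j = ∫ z in Set.Ioi (0 : ℝ), (eiA Ab (-z) * Bb * C * eiA A z) i j)
    (x : ℝ)
    (Γb : Matrix (Fin 𝒩b) (Fin 𝒩b) ℂ)
    (hΓb : Γb = 1 - eiA Ab (-x) * Mb * A * eiA A (2 * x) * M * eiA Ab (-x))
    (hΓbinv : IsUnit Γb)
    (K₁ : ℝ → ℂ)
    (hK₁ : ∀ z : ℝ, x ≤ z →
      K₁ z = -((Cb * eiA Ab (-x) * Γb⁻¹ * eiA Ab (-z) * Bb) 0 0)) :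
    ∀ y : ℝ, x < y →
      Complex.I * (∫ z in Set.Ioi x, K₁ z * (Complex.I * ((C * (A * eiA A (z + y)) * B) 0 0)))
        = (Cb * eiA Ab (-x) * Γb⁻¹ * eiA Ab (-x) * Mb * (A * eiA A (x + y)) * B) 0 0 := by
  intro y _
  have hF := aux_integrable A hA Ab hAb (Bb * C)
  have key := aux_integral (fun z => eiA Ab (-z) * (Bb * C) * eiA A z) Mb hF
    (by simpa only [Matrix.mul_assoc] using hMb)
    (Cb * eiA Ab (-x) * Γb⁻¹ * eiA Ab (-x)) (A * eiA A (x + y) * B)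
  have hfun : ∀ s ∈ Set.Ioi (0 : ℝ),
      K₁ (s + x) * (Complex.I * ((C * (A * eiA A (s + x + y)) * B) 0 0)) =
      (-Complex.I) * ((Cb * eiA Ab (-x) * Γb⁻¹ * eiA Ab (-x)) *
        (eiA Ab (-s) * (Bb * C) * eiA A s) * (A * eiA A (x + y) * B)) 0 0 := by
    intro s hs
    have hs' : 0 < s := hs
    rw [hK₁ (s + x) (by linarith)]
    have e1 : eiA Ab (-(s + x)) = eiA Ab (-x) * eiA Ab (-s) := by
      rw [← eiA_add]; congr 1; ring
    have e2 : A * eiA A (s + x + y) = eiA A s * (A * eiA A (x + y)) := by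
      rw [add_assoc, eiA_add, ← Matrix.mul_assoc, eiA_comm, Matrix.mul_assoc]
    have e3 : ((Cb * eiA Ab (-x) * Γb⁻¹ * eiA Ab (-x)) *
        (eiA Ab (-s) * (Bb * C) * eiA A s) * (A * eiA A (x + y) * B)) =
        (Cb * eiA Ab (-x) * Γb⁻¹ * eiA Ab (-(s + x)) * Bb) *
          (C * (A * eiA A (s + x + y)) * B) := by
      rw [e1, e2]; simp only [Matrix.mul_assoc]
    rw [e3, Matrix.mul_apply (M := Cb * eiA Ab (-x) * Γb⁻¹ * eiA Ab (-(s + x)) * Bb)]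
    simp only [Finset.univ_unique, Finset.sum_singleton, Fin.default_eq_zero]
    ring
  rw [aux_shift, setIntegral_congr_fun measurableSet_Ioi hfun, integral_const_mul, key,
    ← mul_assoc]
  simp only [mul_neg, Complex.I_mul_I, neg_neg, one_mul, Matrix.mul_assoc]
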